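/- arXiv:1503.05761 — 3 statements merged into one kernel-verified Lean document; each statement's English description precedes it below -/
import Mathlib

section
/- Let a, b ∈ F[X] with deg a > deg b ≥ 0 (in particular b ≠ 0), let Dℓ = ⌈log₂(deg a + 1)⌉ and assume Dℓ + 1 ≤ m. Set D_a = Dℓ + 1 and y = 2^{Dℓ} − deg b − 1, and let Q, r ∈ F[X] satisfy a = Q·b + r with deg r < deg b. Put A = a·X_y, B = b·X_y, R = r·X_y. Suppose Λ, H ∈ F[X] satisfy deg Λ = 2^{Dℓ} − 1, deg H ≤ 2^{Dℓ}, and Λ · s_1 · B = s_{D_a} + H. Then deg( Q·H + R·Λ·s_1 ) ≤ 2^{D_a} − 1. -/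
open Polynomial Finset

/-- The GF(2)-linear span of `v 0, …, v (k-1)` as a `Finset`. -/
noncomputable def Vset {F : Type*} [Field F] (v : ℕ → F) (k : ℕ) : Finset F :=
  letI := Classical.decEq F
  (Finset.univ : Finset (Fin k → Bool)).image
    (fun ε => ∑ j : Fin k, if ε j then v j else 0)

/-- The subspace polynomial `s_k(X) = ∏_{a ∈ V_k} (X - a)`. -/
noncomputable def sPoly {F : Type*} [Field F] (v : ℕ → F) (k : ℕ) : Polynomial F :=
  ∏ a ∈ Vset v k, (X - C a)

/-- The basis polynomial `X_i(X) = ∏_{j<m} s_j(X)^{i_j}`, where `i_j` is the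
`j`-th binary digit of `i`. -/
noncomputable def XPoly {F : Type*} [Field F] (v : ℕ → F) (m i : ℕ) : Polynomial F :=
  ∏ j ∈ Finset.range m, (sPoly v j) ^ (Nat.testBit i j).toNat

/-- The normalizing constant `p_i = ∏_{j<m} (s_j(v_j))^{i_j}`. -/
noncomputable def pCoef {F : Type*} [Field F] (v : ℕ → F) (m i : ℕ) : F :=
  ∏ j ∈ Finset.range m, ((sPoly v j).eval (v j)) ^ (Nat.testBit i j).toNat

/-- `v 0, …, v (m-1)` are linearly independent over the prime field GF(2). -/
def LinIndepGF2 {F : Type*} [Field F] (v : ℕ → F) (m : ℕ) : Prop :=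
  ∀ ε : ℕ → Bool, (∑ j ∈ Finset.range m, if ε j then v j else 0) = 0 →
    ∀ j < m, ε j = false

/-!
The two summands are bounded separately. Since `deg Q = deg a - deg b ≤ 2 ^ Dℓ - 1`, the product
`Q * H` has degree at most `2 ^ (Dℓ + 1) - 1`. In the second summand the shift `y` is absorbed by
`deg r ≤ deg b - 1`: as `deg X_y ≤ y`, because the binary expansion of `y` adds up the degrees
`2 ^ j` of the factors, `deg (r * X_y) ≤ 2 ^ Dℓ - 2`, which leaves room for `Λ` of degree
`2 ^ Dℓ - 1` and `s_1` of degree `2`.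
-/

theorem sum_range_toNat_testBit_mul_two_pow (m i : ℕ) :
    ∑ j ∈ range m, (i.testBit j).toNat * 2 ^ j = i % 2 ^ m := by
  induction m with
  | zero => simp [Nat.mod_one]
  | succ m ih => rw [sum_range_succ, ih, Nat.toNat_testBit, Nat.mod_pow_succ, mul_comm]

theorem natDegree_quotient_eq_sub {R : Type*} [Semiring R] [NoZeroDivisors R] (Q : R[X])
    {b r : R[X]} (hr : r.degree < b.degree) :
    Q.natDegree = (Q * b + r).natDegree - b.natDegree := by
  rcases eq_or_ne Q 0 with rfl | hQ
  · simp [Nat.sub_eq_zero_of_le (natDegree_le_natDegree hr.le)]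
  have hb : b ≠ 0 := ne_zero_of_degree_gt hr
  have hrQ : r.degree < (Q * b).degree := by
    rw [degree_mul]
    exact hr.trans_le (le_add_of_nonneg_left (zero_le_degree_iff.mpr hQ))
  rw [natDegree_add_eq_left_of_degree_lt hrQ, natDegree_mul hQ hb, Nat.add_sub_cancel]

theorem natDegree_quotient_mul_lt {R : Type*} [Semiring R] [NoZeroDivisors R] {M N : ℕ}
    {Q b r H : R[X]} (ha : (Q * b + r).natDegree < M) (hr : r.degree < b.degree)
    (hH : H.natDegree ≤ N) : (Q * H).natDegree < M + N := by
  have hQ : Q.natDegree < M :=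
    (natDegree_quotient_eq_sub Q hr).trans_lt ((Nat.sub_le _ _).trans_lt ha)
  exact natDegree_mul_le.trans_lt (Nat.add_lt_add_of_lt_of_le hQ hH)

section SubspacePolynomial

variable {F : Type*} [Field F] (v : ℕ → F)

theorem card_Vset_le (k : ℕ) : #(Vset v k) ≤ 2 ^ k := by
  classical
  exact card_image_le.trans_eq (by simp)

theorem natDegree_sPoly_le (k : ℕ) : (sPoly v k).natDegree ≤ 2 ^ k := by
  rw [sPoly, natDegree_finsetProd_X_sub_C_eq_card]
  exact card_Vset_le v k

theorem natDegree_XPoly_le_mod (m i : ℕ) : (XPoly v m i).natDegree ≤ i % 2 ^ m :=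
  calc (XPoly v m i).natDegree
      ≤ ∑ j ∈ range m, (sPoly v j ^ (i.testBit j).toNat).natDegree := natDegree_prod_le _ _
    _ ≤ ∑ j ∈ range m, (i.testBit j).toNat * 2 ^ j :=
        sum_le_sum fun j _ => natDegree_pow_le_of_le _ (natDegree_sPoly_le v j)
    _ = i % 2 ^ m := sum_range_toNat_testBit_mul_two_pow m i

theorem natDegree_XPoly_le (m i : ℕ) : (XPoly v m i).natDegree ≤ i :=
  (natDegree_XPoly_le_mod v m i).trans (Nat.mod_le _ _)

theorem natDegree_mul_XPoly_mul_mul_sPoly_one_lt (m : ℕ) {N y : ℕ} {b r Λ : F[X]}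
    (hy : y + b.natDegree < N) (hr : r.degree < b.degree) (hΛ : Λ.natDegree < N) :
    (r * XPoly v m y * Λ * sPoly v 1).natDegree < N + N := by
  rcases eq_or_ne r 0 with rfl | hr0
  · simp only [zero_mul, natDegree_zero]
    lia
  have hrb : r.natDegree < b.natDegree := natDegree_lt_natDegree hr0 hr
  calc (r * XPoly v m y * Λ * sPoly v 1).natDegree
      ≤ r.natDegree + y + Λ.natDegree + 2 ^ 1 := by
        refine natDegree_mul_le_of_le (natDegree_mul_le_of_le ?_ le_rfl) (natDegree_sPoly_le v 1)
        exact natDegree_mul_le_of_le le_rfl (natDegree_XPoly_le v m y)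
    _ < N + N := by lia

end SubspacePolynomial

theorem division_degree_bound_general {F : Type*} [Field F] (v : ℕ → F) (m : ℕ)
    {D y : ℕ} {a b Q r Λ H : F[X]} (ha : a.natDegree < 2 ^ D) (hy : y + b.natDegree < 2 ^ D)
    (hqr : a = Q * b + r) (hr : r.degree < b.degree)
    (hΛ : Λ.degree ≤ ((2 ^ D - 1 : ℕ) : WithBot ℕ))
    (hH : H.degree ≤ ((2 ^ D : ℕ) : WithBot ℕ)) :
    (Q * H + r * XPoly v m y * Λ * sPoly v 1).degree
      ≤ ((2 ^ (D + 1) - 1 : ℕ) : WithBot ℕ) := by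
  subst hqr
  have hΛ' : Λ.natDegree < 2 ^ D :=
    (natDegree_le_of_degree_le hΛ).trans_lt (Nat.sub_one_lt (by positivity))
  have hquot : (Q * H).natDegree < 2 ^ D + 2 ^ D :=
    natDegree_quotient_mul_lt ha hr (natDegree_le_of_degree_le hH)
  have hrem : (r * XPoly v m y * Λ * sPoly v 1).natDegree < 2 ^ D + 2 ^ D :=
    natDegree_mul_XPoly_mul_mul_sPoly_one_lt v m hy hr hΛ'
  refine degree_le_of_natDegree_le (Nat.le_sub_one_of_lt ?_)
  rw [pow_succ, mul_two]
  exact (natDegree_add_le _ _).trans_lt (max_lt hquot hrem)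

/-- degree bound in the fast division algorithm:
`deg(Q·H + R·Λ·s_1) ≤ 2^(D_a) - 1` where `D_a = Dℓ + 1`. -/
theorem division_degree_bound {F : Type*} [Field F] [Fintype F] (m : ℕ) (hm : 1 ≤ m)
    (hcard : Fintype.card F = 2 ^ m) (v : ℕ → F) (hv : LinIndepGF2 v m)
    (a b : Polynomial F) (hb : 0 ≤ b.degree) (hab : b.degree < a.degree)
    (Dℓ : ℕ) (hD : Dℓ = Nat.clog 2 (a.natDegree + 1)) (hDm : Dℓ + 1 ≤ m)
    (y : ℕ) (hy : y = 2 ^ Dℓ - b.natDegree - 1)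
    (Q r : Polynomial F) (hqr : a = Q * b + r) (hr : r.degree < b.degree)
    (Λ H : Polynomial F)
    (hΛ : Λ.degree = ((2 ^ Dℓ - 1 : ℕ) : WithBot ℕ))
    (hH : H.degree ≤ ((2 ^ Dℓ : ℕ) : WithBot ℕ))
    (heq : Λ * sPoly v 1 * (b * XPoly v m y) = sPoly v (Dℓ + 1) + H) :
    (Q * H + (r * XPoly v m y) * Λ * sPoly v 1).degree
      ≤ ((2 ^ (Dℓ + 1) - 1 : ℕ) : WithBot ℕ) := by
  have ha : a.natDegree < 2 ^ Dℓ := hD ▸ Nat.le_pow_clog one_lt_two _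
  have hba : b.natDegree ≤ a.natDegree := natDegree_le_natDegree hab.le
  exact division_degree_bound_general v m ha (by lia) hqr hr hΛ.le hH
end

section
/- (Newton-iteration invariant) Let 1 ≤ j with j + 2 ≤ m. Suppose Λ, B, B̄, r̄ ∈ F[X] satisfy deg Λ ≤ 2^j − 1, deg B ≤ 2^j − 1, deg B̄ ≤ 2^j − 1, deg r̄ ≤ 2^j, and Λ · B · s_1 = s_{j+1} + r̄. Set B′ = B·s_j + B̄ and let Λ′ be the quotient of (s_j · Λ)^2 · B′ · s_1 on division by the monic polynomial s_{j+2}. Then Λ′ · B′ · s_1 = s_{j+2} + r̄′ for some r̄′ ∈ F[X] with deg r̄′ ≤ 2^{j+1} (equivalently, deg(Λ′·B′·s_1 + s_{j+2}) ≤ 2^{j+1}, subtraction equaling addition in characteristic 2). -/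
open Polynomial Finset

/-!
Put `A = s_j Λ` and `G = B' s_1`. The recursion `s_{k+1} = s_k (s_k + s_k(v_k))` turns the
hypothesis into `A G = s_{j+2} + W` with `deg W ≤ 3 · 2^j`, so `A` approximates the quotient of
`s_{j+2}` by `G`. In characteristic 2 squaring gives `A² G · G = s_{j+2}² + W²`, so that
`A² G / s_{j+2}` is the next Newton approximation. If `R` is the remainder of `A² G`, the new error
`E` satisfies `s_{j+2} E = W² - R G`; the right-hand side has degree at most `6 · 2^j`, whence
`deg E ≤ 2 · 2^j`.
-/

section BinaryCombinations

/-- The sum of the `v i`, `i < k`, selected by the bits `ε`: a linear combination over GF(2). It is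
written so that `Vset v k` is by definition the image of `binaryComb v k`. -/
def binaryComb {M : Type*} [AddCommMonoid M] (v : ℕ → M) (k : ℕ) (ε : Fin k → Bool) : M :=
  ∑ i : Fin k, if ε i then v i else 0

lemma binaryComb_snoc {M : Type*} [AddCommMonoid M] (v : ℕ → M) (k : ℕ) (ε : Fin k → Bool)
    (b : Bool) :
    binaryComb v (k + 1) (Fin.snoc ε b : Fin (k + 1) → Bool) =
      binaryComb v k ε + if b then v k else 0 := by
  simp [binaryComb, Fin.sum_univ_castSucc]

lemma binaryComb_xor {R : Type*} [Semiring R] [CharP R 2] (v : ℕ → R) (k : ℕ)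
    (ε ε' : Fin k → Bool) :
    binaryComb v k (fun i => xor (ε i) (ε' i)) = binaryComb v k ε + binaryComb v k ε' := by
  simp only [binaryComb, ← Finset.sum_add_distrib]
  refine Finset.sum_congr rfl fun i _ => ?_
  rcases Bool.eq_false_or_eq_true (ε i) with h | h <;>
    rcases Bool.eq_false_or_eq_true (ε' i) with h' | h' <;>
    simp [h, h', CharTwo.add_self_eq_zero]

variable {F : Type*} [Field F] {v : ℕ → F} {k m : ℕ}

lemma LinIndepGF2.of_le (hv : LinIndepGF2 v m) (hkm : k ≤ m) : LinIndepGF2 v k := by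
  intro ε hε i hi
  have hsum : (∑ j ∈ range m, if ε j && decide (j < k) then v j else 0) = 0 := by
    rw [← hε, ← Finset.sum_subset (range_subset_range.2 hkm) fun j _ hj => by simp_all]
    exact Finset.sum_congr rfl fun j hj => by simp_all
  simpa [hi] using hv (fun j => ε j && decide (j < k)) hsum i (hi.trans_le hkm)

lemma LinIndepGF2.eq_false_of_binaryComb_eq_zero (hv : LinIndepGF2 v k) {ε : Fin k → Bool}
    (hε : binaryComb v k ε = 0) (i : Fin k) : ε i = false := by
  let extended : ℕ → Bool := fun j => if h : j < k then ε ⟨j, h⟩ else false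
  have hsum : (∑ j ∈ range k, if extended j then v j else 0) = 0 := by
    simpa [Finset.sum_range, extended, binaryComb] using hε
  simpa [extended] using hv extended hsum i i.isLt

lemma LinIndepGF2.binaryComb_injective [CharP F 2] (hv : LinIndepGF2 v k) :
    Function.Injective (binaryComb v k) := by
  intro ε ε' h
  have hxor : binaryComb v k (fun i => xor (ε i) (ε' i)) = 0 := by
    rw [binaryComb_xor, h, CharTwo.add_self_eq_zero]
  funext i
  simpa using hv.eq_false_of_binaryComb_eq_zero hxor i

end BinaryCombinations

section SubspacePolynomials

variable {F : Type*} [Field F] {v : ℕ → F} {k : ℕ}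

lemma sPoly_monic (v : ℕ → F) (k : ℕ) : (sPoly v k).Monic :=
  monic_prod_X_sub_C id (Vset v k)

variable [CharP F 2]

lemma sPoly_eq_prod_binaryComb (hv : LinIndepGF2 v k) :
    sPoly v k = ∏ ε : Fin k → Bool, (X - C (binaryComb v k ε)) := by
  classical
  exact Finset.prod_image hv.binaryComb_injective.injOn

lemma natDegree_sPoly (hv : LinIndepGF2 v k) : (sPoly v k).natDegree = 2 ^ k := by
  rw [sPoly_eq_prod_binaryComb hv, natDegree_finsetProd_X_sub_C_eq_card]
  simp

lemma sPoly_succ_eq_mul_comp (hv : LinIndepGF2 v (k + 1)) :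
    sPoly v (k + 1) = sPoly v k * (sPoly v k).comp (X + C (v k)) := by
  rw [sPoly_eq_prod_binaryComb hv, sPoly_eq_prod_binaryComb (hv.of_le k.le_succ),
    ← (Fin.snocEquiv fun _ : Fin (k + 1) => Bool).prod_comp, Fintype.prod_prod_type,
    Fintype.prod_bool, mul_comm, Polynomial.prod_comp]
  congr 1 <;> refine Finset.prod_congr rfl fun ε _ => ?_
  · simp [Fin.snocEquiv, binaryComb_snoc]
  · have hneg : -C (v k) = C (v k) := CharTwo.neg_eq _
    simp only [Fin.snocEquiv, Equiv.coe_fn_mk, binaryComb_snoc, if_true, C_add, sub_comp, X_comp,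
      C_comp]
    linear_combination hneg

lemma sPoly_comp_X_add_C (hv : LinIndepGF2 v k) (a : F) :
    (sPoly v k).comp (X + C a) = sPoly v k + C ((sPoly v k).eval a) := by
  induction k generalizing a with
  | zero => simp [sPoly_eq_prod_binaryComb hv, binaryComb]
  | succ k ih =>
    have translate := ih (hv.of_le k.le_succ)
    rw [sPoly_succ_eq_mul_comp hv, translate (v k)]
    simp only [mul_comp, add_comp, C_comp, translate, eval_mul, eval_add, eval_C, C_mul, C_add]
    linear_combination
      sPoly v k * C (eval a (sPoly v k)) * (CharTwo.two_eq_zero : (2 : F[X]) = 0)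

lemma sPoly_succ (hv : LinIndepGF2 v (k + 1)) :
    sPoly v (k + 1) = sPoly v k * (sPoly v k + C ((sPoly v k).eval (v k))) := by
  rw [sPoly_succ_eq_mul_comp hv, sPoly_comp_X_add_C (hv.of_le k.le_succ)]

end SubspacePolynomials

section NewtonStep

variable {R : Type*} [CommRing R]

lemma natDegree_mul_sub_le_of_mul_eq {S T Λ B Bbar D r : R[X]} {c d : R} {n : ℕ}
    (hS : S.natDegree ≤ n) (hT : T = S * (S + C c)) (hr : r.natDegree ≤ n)
    (hΛ : (Λ * Bbar * D).natDegree ≤ 2 * n) (h : Λ * B * D = T + r) :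
    (S * Λ * ((B * S + Bbar) * D) - T * (T + C d)).natDegree ≤ 3 * n := by
  have hTdeg : T.natDegree ≤ 2 * n := by
    rw [hT, two_mul]
    exact natDegree_mul_le_of_le hS (by simpa using hS)
  have hTlin : (T * (C c * S + C d)).natDegree ≤ 2 * n + n :=
    natDegree_mul_le_of_le hTdeg (natDegree_add_C.trans_le ((natDegree_C_mul_le c S).trans hS))
  have hSr : (S ^ 2 * r).natDegree ≤ 2 * n + n :=
    natDegree_mul_le_of_le (natDegree_pow_le_of_le 2 hS) hr
  have hSΛ : (S * (Λ * Bbar * D)).natDegree ≤ n + 2 * n := natDegree_mul_le_of_le hS hΛ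
  have herror : S * Λ * ((B * S + Bbar) * D) - T * (T + C d) =
      S ^ 2 * r + S * (Λ * Bbar * D) - T * (C c * S + C d) := by
    linear_combination S ^ 2 * h - T * hT
  rw [herror]
  exact (natDegree_sub_le_of_le (natDegree_add_le_of_le hSr hSΛ) hTlin).trans (by omega)

lemma mul_divByMonic_mul_sub_eq [CharP R 2] (U A G : R[X]) :
    U * (A ^ 2 * G /ₘ U * G - U) = (A * G - U) ^ 2 - A ^ 2 * G %ₘ U * G := by
  linear_combination G * modByMonic_add_div (A ^ 2 * G) U +
    (A * G * U - U ^ 2) * (CharTwo.two_eq_zero : (2 : R[X]) = 0)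

lemma natDegree_divByMonic_mul_sub_le [CharP R 2] {U A G : R[X]} {e : ℕ} (hU : U.Monic)
    (hAG : 2 * (A * G - U).natDegree ≤ U.natDegree + e) (hG : G.natDegree ≤ e + 1) :
    (A ^ 2 * G /ₘ U * G - U).natDegree ≤ e := by
  have hRG : (A ^ 2 * G %ₘ U * G).natDegree ≤ U.natDegree + e := by
    rcases eq_or_ne U 1 with rfl | hU1
    · simp
    · have := natDegree_modByMonic_lt (A ^ 2 * G) hU hU1
      exact natDegree_mul_le.trans (by omega)
  have hmul : (U * (A ^ 2 * G /ₘ U * G - U)).natDegree ≤ U.natDegree + e := by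
    rw [mul_divByMonic_mul_sub_eq]
    exact (natDegree_sub_le_of_le (natDegree_pow_le.trans hAG) hRG).trans (max_self _).le
  rcases eq_or_ne (A ^ 2 * G /ₘ U * G - U) 0 with hE | hE
  · simp [hE]
  · rw [hU.natDegree_mul' hE] at hmul
    exact Nat.le_of_add_le_add_left hmul

end NewtonStep

theorem newton_invariant_general {F : Type*} [Field F] [CharP F 2] {v : ℕ → F} {j : ℕ}
    (hv : LinIndepGF2 v (j + 2)) {Λ B Bbar rbar : F[X]}
    (hΛ : Λ.degree ≤ ((2 ^ j - 1 : ℕ) : WithBot ℕ))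
    (hB : B.degree ≤ ((2 ^ j - 1 : ℕ) : WithBot ℕ))
    (hBbar : Bbar.degree ≤ ((2 ^ j - 1 : ℕ) : WithBot ℕ))
    (hrbar : rbar.degree ≤ ((2 ^ j : ℕ) : WithBot ℕ))
    (heq : Λ * B * sPoly v 1 = sPoly v (j + 1) + rbar) :
    ∃ rbar' : F[X],
      (((sPoly v j * Λ) ^ 2 * (B * sPoly v j + Bbar) * sPoly v 1) /ₘ sPoly v (j + 2))
          * (B * sPoly v j + Bbar) * sPoly v 1
        = sPoly v (j + 2) + rbar' ∧
      rbar'.degree ≤ ((2 ^ (j + 1) : ℕ) : WithBot ℕ) := by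
  have hpos : 0 < 2 ^ j := by positivity
  have hS : (sPoly v j).natDegree ≤ 2 ^ j := (natDegree_sPoly (hv.of_le (by omega))).le
  have hs₁ : (sPoly v 1).natDegree ≤ 2 := (natDegree_sPoly (hv.of_le (by omega))).le
  have hUdeg : (sPoly v (j + 2)).natDegree = 4 * 2 ^ j := by rw [natDegree_sPoly hv]; ring
  rw [← natDegree_le_iff_degree_le] at hΛ hB hBbar hrbar
  have hΛBbar : (Λ * Bbar * sPoly v 1).natDegree ≤ 2 * 2 ^ j :=
    (natDegree_mul_le_of_le (natDegree_mul_le_of_le hΛ hBbar) hs₁).trans (by omega)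
  have hB' : (B * sPoly v j + Bbar).natDegree ≤ 2 * 2 ^ j - 1 :=
    natDegree_add_le_of_degree_le ((natDegree_mul_le_of_le hB hS).trans (by omega))
      (hBbar.trans (by omega))
  have hG : ((B * sPoly v j + Bbar) * sPoly v 1).natDegree ≤ 2 ^ (j + 1) + 1 :=
    (natDegree_mul_le_of_le hB' hs₁).trans (by omega)
  have hW : (sPoly v j * Λ * ((B * sPoly v j + Bbar) * sPoly v 1) - sPoly v (j + 2)).natDegree ≤
      3 * 2 ^ j := by
    rw [sPoly_succ hv]
    exact natDegree_mul_sub_le_of_mul_eq hS (sPoly_succ (hv.of_le (by omega))) hrbar hΛBbar heq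
  refine ⟨_, (add_sub_cancel _ _).symm, degree_le_of_natDegree_le ?_⟩
  simp only [mul_assoc _ (B * sPoly v j + Bbar)]
  exact natDegree_divByMonic_mul_sub_le (sPoly_monic v _) (by omega) hG

/-- the Newton-iteration invariant: if `Λ·B·s_1 = s_(j+1) + r̄`
with the stated degree bounds, and `B' = B·s_j + B̄`, `Λ'` is the quotient of
`(s_j·Λ)^2·B'·s_1` by `s_(j+2)`, then `Λ'·B'·s_1 = s_(j+2) + r̄'` with
`deg r̄' ≤ 2^(j+1)`. -/
theorem newton_invariant {F : Type*} [Field F] [Fintype F] (m : ℕ) (hm : 1 ≤ m)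
    (hcard : Fintype.card F = 2 ^ m) (v : ℕ → F) (hv : LinIndepGF2 v m)
    (j : ℕ) (hj : 1 ≤ j) (hjm : j + 2 ≤ m)
    (Λ B Bbar rbar : Polynomial F)
    (hΛ : Λ.degree ≤ ((2 ^ j - 1 : ℕ) : WithBot ℕ))
    (hB : B.degree ≤ ((2 ^ j - 1 : ℕ) : WithBot ℕ))
    (hBbar : Bbar.degree ≤ ((2 ^ j - 1 : ℕ) : WithBot ℕ))
    (hrbar : rbar.degree ≤ ((2 ^ j : ℕ) : WithBot ℕ))
    (heq : Λ * B * sPoly v 1 = sPoly v (j + 1) + rbar) :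
    ∃ rbar' : Polynomial F,
      (((sPoly v j * Λ) ^ 2 * (B * sPoly v j + Bbar) * sPoly v 1) /ₘ sPoly v (j + 2))
          * (B * sPoly v j + Bbar) * sPoly v 1
        = sPoly v (j + 2) + rbar' ∧
      rbar'.degree ≤ ((2 ^ (j + 1) : ℕ) : WithBot ℕ) := by
  have : Fact (Nat.Prime 2) := ⟨Nat.prime_two⟩
  have : CharP F 2 := charP_of_card_eq_prime_pow hcard
  exact newton_invariant_general (hv.of_le hjm) hΛ hB hBbar hrbar heq
end

section
/- (Coset-interpolant identity underlying systematic encoding) Let 1 ≤ t < m and T = 2^t, and let f ∈ F[X] with deg f < 2^m − T. For each coset C of the additive subgroup V_t in F (there are 2^{m−t} such cosets, each of size T), let g_C ∈ F[X] be the unique polynomial of degree < T with g_C(c) = f(c) for all c ∈ C (the Lagrange interpolant of f on C). Then Σ_C g_C = 0, the sum running over all cosets of V_t in F. -/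
open Polynomial Finset

/-!
Let `H ≤ G` be finite additive subgroups of a field. By translation invariance, all Lagrange basis
polynomials of all cosets of `H` are translates `P (X - x)` of a single one, `P`, of degree
`|H| - 1`. Hence the sum of the coset interpolants of `f` is the convolution
`∑ x ∈ G, f x * P (X - x)`. Its value at `y` is the sum over `G` of the polynomial `f(X) P(y - X)`,
whose degree is less than `|G| - 1`. Such a sum vanishes: the Lagrange formula on `G` expresses the
coefficient of degree `|G| - 1` as a nonzero multiple of the sum of the values.
-/

section CosetInterpolation

variable {K : Type*} [Field K]

lemma basisDivisor_comp_X_sub_C (x y c : K) :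
    (Lagrange.basisDivisor x y).comp (X - C c) = Lagrange.basisDivisor (x + c) (y + c) := by
  simp only [Lagrange.basisDivisor, mul_comp, sub_comp, C_comp, X_comp, add_sub_add_right_eq_sub,
    C_add]
  ring

open Classical in
/-- The Lagrange basis polynomial of a finite additive subgroup at the node `0`. Its translates are
the Lagrange basis polynomials of all the cosets. -/
noncomputable def lagrangeKernel (H : AddSubgroup K) [Fintype H] : K[X] :=
  Lagrange.basis univ ((↑) : H → K) 0

variable (H : AddSubgroup K) [Fintype H]

lemma degree_lagrangeKernel :
    (lagrangeKernel H).degree = ((Fintype.card H - 1 : ℕ) : WithBot ℕ) := by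
  classical
  exact Lagrange.degree_basis Subtype.val_injective.injOn (mem_univ 0)

lemma coeff_lagrangeKernel_comp (x : K) :
    ((lagrangeKernel H).comp (X - C x)).coeff (Fintype.card H - 1) =
      (lagrangeKernel H).leadingCoeff := by
  have hnat : ((lagrangeKernel H).comp (X - C x)).natDegree = Fintype.card H - 1 := by
    rw [natDegree_comp, natDegree_X_sub_C, mul_one,
      natDegree_eq_of_degree_eq_some (degree_lagrangeKernel H)]
  rw [← hnat, coeff_natDegree, leadingCoeff_comp (by simp), leadingCoeff_X_sub_C, one_pow, mul_one]

open Classical in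
lemma basis_coset_eq_lagrangeKernel_comp (β : K) (a : H) :
    Lagrange.basis univ (fun b : H => (b + β : K)) a =
      (lagrangeKernel H).comp (X - C (a + β : K)) := by
  rw [lagrangeKernel, Lagrange.basis, Lagrange.basis, Polynomial.prod_comp]
  refine prod_equiv (Equiv.subRight a) (fun b => by simp [sub_eq_zero]) fun b _ => ?_
  rw [basisDivisor_comp_X_sub_C]
  simp [← add_assoc]

variable {H}

lemma eq_sum_lagrangeKernel_comp {p : K[X]} {r : K → K} {β : K}
    (hdeg : p.degree < Fintype.card H) (heval : ∀ a ∈ H, p.eval (a + β) = r (a + β)) :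
    p = ∑ a : H, C (r (a + β)) * (lagrangeKernel H).comp (X - C (a + β : K)) := by
  classical
  have hinj : Set.InjOn (fun a : H => (a + β : K)) (univ : Finset H) :=
    ((add_left_injective β).comp Subtype.val_injective).injOn
  calc p = Lagrange.interpolate univ (fun a : H => (a + β : K)) fun a => r (a + β) :=
        Lagrange.eq_interpolate_of_eval_eq _ hinj hdeg fun a _ => heval a a.2
    _ = _ := by simp only [Lagrange.interpolate_apply, basis_coset_eq_lagrangeKernel_comp]

lemma sum_eval_addSubgroup_eq_zero {p : K[X]}
    (hdeg : p.degree < ((Fintype.card H - 1 : ℕ) : WithBot ℕ)) :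
    ∑ a : H, p.eval (a : K) = 0 := by
  have hne : (lagrangeKernel H).leadingCoeff ≠ 0 := by
    rw [leadingCoeff_ne_zero, ← degree_ne_bot, degree_lagrangeKernel]
    exact WithBot.coe_ne_bot
  refine (mul_eq_zero.1 ?_).resolve_right hne
  calc (∑ a : H, p.eval (a : K)) * (lagrangeKernel H).leadingCoeff
      = (∑ a : H, C (p.eval (a + 0 : K)) * (lagrangeKernel H).comp (X - C (a + 0 : K))).coeff
          (Fintype.card H - 1) := by
        simp only [finsetSum_coeff, coeff_C_mul, coeff_lagrangeKernel_comp, add_zero, sum_mul]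
    _ = p.coeff (Fintype.card H - 1) := by
        have hlt : p.degree < Fintype.card H :=
          hdeg.trans_le (Nat.cast_le.2 (Nat.sub_le _ _))
        rw [← eq_sum_lagrangeKernel_comp (r := p.eval) hlt fun _ _ => rfl]
    _ = 0 := coeff_eq_zero_of_degree_lt hdeg

lemma sum_eval_mul_lagrangeKernel_eq_zero {G : AddSubgroup K} [Fintype G] (hHG : H ≤ G) {f : K[X]}
    (hf : f.degree < ((Fintype.card G - Fintype.card H : ℕ) : WithBot ℕ)) (y : K) :
    ∑ x : G, f.eval (x : K) * (lagrangeKernel H).eval (y - x) = 0 := by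
  have hdeg_sub : (C y - X).degree = 1 := by
    rw [← neg_sub, degree_neg, degree_X_sub_C]
  have hdeg : (f * (lagrangeKernel H).comp (C y - X)).degree <
      ((Fintype.card G - 1 : ℕ) : WithBot ℕ) := by
    have hcard : Fintype.card G - 1 = Fintype.card G - Fintype.card H + (Fintype.card H - 1) := by
      have hpos : 0 < Fintype.card H := Fintype.card_pos
      have hle : Fintype.card H ≤ Fintype.card G := Set.card_le_card hHG
      omega
    rw [degree_mul, degree_comp (by simp [hdeg_sub]), hdeg_sub, mul_one, degree_lagrangeKernel,
      hcard, Nat.cast_add]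
    exact WithBot.add_lt_add_right WithBot.coe_ne_bot hf
  simpa using sum_eval_addSubgroup_eq_zero hdeg

end CosetInterpolation

lemma sum_add_transversal {A M : Type*} [AddGroup A] [AddCommMonoid M] {G H : AddSubgroup A}
    [Fintype G] [Fintype H] (hHG : H ≤ G) {B : Finset A} (hBG : ∀ β ∈ B, β ∈ G)
    (hrep : ∀ x ∈ G, ∃! β, β ∈ B ∧ x - β ∈ H) (φ : A → M) :
    ∑ β ∈ B, ∑ a : H, φ (a + β) = ∑ x : G, φ x := by
  have hmem {q : A × H} (hq : q ∈ B ×ˢ (univ : Finset H)) : (q.2 + q.1 : A) ∈ G :=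
    G.add_mem (hHG q.2.2) (hBG _ (mem_product.1 hq).1)
  rw [← sum_product']
  refine sum_bij (fun q hq => ⟨q.2 + q.1, hmem hq⟩) (fun _ _ => mem_univ _) ?_ ?_ fun _ _ => rfl
  · rintro ⟨β, a⟩ hq ⟨β', a'⟩ hq' heq
    have hadd : (a + β : A) = a' + β' := congrArg Subtype.val heq
    obtain rfl : β = β' := (hrep _ (hmem hq)).unique
      ⟨(mem_product.1 hq).1, by simp⟩ ⟨(mem_product.1 hq').1, by simp [hadd]⟩
    simpa using hadd
  · rintro ⟨x, hx⟩ -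
    obtain ⟨β, ⟨hβ, hsub⟩, -⟩ := hrep x hx
    exact ⟨(β, ⟨x - β, hsub⟩), by simp [hβ], by simp⟩

theorem coset_interpolant_sum_general {K : Type*} [Field K] {G H : AddSubgroup K} [Finite G]
    (hHG : H ≤ G) {f : K[X]} (hf : f.degree < ((Nat.card G - Nat.card H : ℕ) : WithBot ℕ))
    {B : Finset K} (hBG : ∀ β ∈ B, β ∈ G) (hrep : ∀ x ∈ G, ∃! β, β ∈ B ∧ x - β ∈ H)
    {g : K → K[X]} (hgdeg : ∀ β ∈ B, (g β).degree < (Nat.card H : WithBot ℕ))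
    (hgval : ∀ β ∈ B, ∀ a ∈ H, (g β).eval (a + β) = f.eval (a + β)) :
    ∑ β ∈ B, g β = 0 := by
  have : Finite H := Finite.of_injective _ (AddSubgroup.inclusion_injective hHG)
  have := Fintype.ofFinite G
  have := Fintype.ofFinite H
  simp only [Nat.card_eq_fintype_card] at hf hgdeg
  have hconv : ∑ β ∈ B, g β =
      ∑ x : G, C (f.eval (x : K)) * (lagrangeKernel H).comp (X - C (x : K)) := by
    rw [← sum_add_transversal hHG hBG hrep
      fun x => C (f.eval x) * (lagrangeKernel H).comp (X - C x)]
    exact sum_congr rfl fun β hβ =>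
      eq_sum_lagrangeKernel_comp (r := f.eval) (hgdeg β hβ) (hgval β hβ)
  have hdeg : (∑ β ∈ B, g β).degree < Fintype.card G := by
    refine (degree_sum_le _ _).trans_lt ((Finset.sup_lt_iff (WithBot.bot_lt_coe _)).2 ?_)
    exact fun β hβ => (hgdeg β hβ).trans_le (Nat.cast_le.2 (Set.card_le_card hHG))
  refine eq_zero_of_degree_lt_of_eval_index_eq_zero (v := ((↑) : G → K))
    univ Subtype.val_injective.injOn hdeg fun y _ => ?_
  rw [hconv, eval_finsetSum]
  simpa using sum_eval_mul_lagrangeKernel_eq_zero hHG hf y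

section GF2Span

lemma sum_ite_xor {ι R : Type*} [Semiring R] [CharP R 2] (s : Finset ι) (v : ι → R)
    (a b : ι → Bool) :
    (∑ j ∈ s, if a j ^^ b j then v j else 0) =
      (∑ j ∈ s, if a j then v j else 0) + ∑ j ∈ s, if b j then v j else 0 := by
  rw [← sum_add_distrib]
  refine sum_congr rfl fun j _ => ?_
  cases a j <;> cases b j <;> simp [CharTwo.add_self_eq_zero]

variable {F : Type*} [Field F] {v : ℕ → F} {k n : ℕ}

lemma mem_Vset {x : F} :
    x ∈ Vset v k ↔ ∃ ε : Fin k → Bool, (∑ j, if ε j then v j else 0) = x := by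
  simp [Vset]

lemma LinIndepGF2.mono (hkn : k ≤ n) (hv : LinIndepGF2 v n) : LinIndepGF2 v k := by
  intro ε hε j hj
  have hsum : (∑ i ∈ range n, if ε i && decide (i < k) then v i else 0) = 0 := by
    rw [← sum_subset (range_subset_range.2 hkn)]
    · exact (sum_congr rfl fun i hi => by simp [mem_range.1 hi]).trans hε
    · exact fun i _ hi => by simp [mem_range.not.1 hi]
  simpa [hj] using hv _ hsum j (hj.trans_le hkn)

variable [CharP F 2]

lemma LinIndepGF2.injective_sum_ite (hv : LinIndepGF2 v k) :
    Function.Injective fun ε : Fin k → Bool => ∑ j, if ε j then v j else 0 := by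
  intro a b hab
  let ε (j : ℕ) : Bool := if h : j < k then a ⟨j, h⟩ ^^ b ⟨j, h⟩ else false
  have hε : (∑ j ∈ range k, if ε j then v j else 0) = 0 := by
    rw [← Fin.sum_univ_eq_sum_range fun j => if ε j then v j else 0]
    simpa only [ε, Fin.is_lt, dite_true, Fin.eta, sum_ite_xor, CharTwo.add_eq_zero] using hab
  funext j
  simpa [ε] using hv ε hε j j.2

lemma LinIndepGF2.card_Vset (hv : LinIndepGF2 v k) : (Vset v k).card = 2 ^ k := by
  classical
  rw [Vset, card_image_of_injective _ hv.injective_sum_ite]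
  simp

variable (v k) in
/-- `Vset v k` as an additive subgroup. In characteristic 2, it is closed under addition because
adding two 0-1 combinations takes the exclusive or of their coefficients. -/
noncomputable def gf2Span : AddSubgroup F where
  carrier := Vset v k
  zero_mem' := mem_Vset.2 ⟨fun _ => false, by simp⟩
  add_mem' := by
    intro x y hx hy
    obtain ⟨a, rfl⟩ := mem_Vset.1 hx
    obtain ⟨b, rfl⟩ := mem_Vset.1 hy
    exact mem_Vset.2 ⟨fun j => a j ^^ b j, sum_ite_xor univ _ a b⟩
  neg_mem' := by simp [CharTwo.neg_eq]

lemma LinIndepGF2.card_gf2Span (hv : LinIndepGF2 v k) : Nat.card (gf2Span v k) = 2 ^ k :=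
  (Nat.card_eq_finsetCard (Vset v k)).trans hv.card_Vset

end GF2Span

/-- coset-interpolant identity: let `T = 2^t`, `deg f < 2^m - T`,
let `B` be a set of representatives of the cosets of `V_t` in `F`, and for each
`β ∈ B` let `g β` be the interpolant of `f` on the coset `V_t + β` (degree `< T`,
agreeing with `f` on the coset). Then `Σ_{β ∈ B} g β = 0`. -/
theorem coset_interpolant_sum {F : Type*} [Field F] [Fintype F] (m : ℕ) (hm : 1 ≤ m)
    (hcard : Fintype.card F = 2 ^ m) (v : ℕ → F) (hv : LinIndepGF2 v m)
    (t : ℕ) (ht1 : 1 ≤ t) (htm : t < m)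
    (f : Polynomial F) (hf : f.degree < ((2 ^ m - 2 ^ t : ℕ) : WithBot ℕ))
    (B : Finset F)
    (hrep : ∀ x : F, ∃! β, β ∈ B ∧ x - β ∈ Vset v t)
    (g : F → Polynomial F)
    (hgdeg : ∀ β ∈ B, (g β).degree < ((2 ^ t : ℕ) : WithBot ℕ))
    (hgval : ∀ β ∈ B, ∀ a ∈ Vset v t, (g β).eval (a + β) = f.eval (a + β)) :
    ∑ β ∈ B, g β = 0 := by
  have : Fact (Nat.Prime 2) := ⟨Nat.prime_two⟩
  have : CharP F 2 := charP_of_card_eq_prime_pow hcard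
  have hV : Nat.card (gf2Span v t) = 2 ^ t := (hv.mono htm.le).card_gf2Span
  exact coset_interpolant_sum_general (G := ⊤) (H := gf2Span v t) le_top
    (by rwa [AddSubgroup.card_top, Nat.card_eq_fintype_card, hcard, hV])
    (fun _ _ => AddSubgroup.mem_top _) (fun x _ => hrep x) (by rwa [hV]) hgval
end
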